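/- Let A ∈ ℝ^{n×d} with A Aᵀ invertible, rows A_1,…,A_n ∈ ℝ^d, and fix i ∈ [n]. Let T = {Σ_j a_j A_j : Σ_j a_j = 1} and T_{∖i} = {Σ_{j≠i} a_j A_j : Σ_{j≠i} a_j = 1}, and let Π_T(0) and Π_{T∖i}(0) denote the unique minimum-Euclidean-norm points of T and T_{∖i}, respectively, and Π_{T∖i}(A_i) the Euclidean projection of A_i onto T_{∖i}. Write Π_T(0) = Σ_{j=1}^n a*_j A_j with Σ_j a*_j = 1 (the coefficients a* are unique since A Aᵀ is invertible). Then a*_i = (‖Π_{T∖i}(0)‖₂² − A_iᵀ Π_{T∖i}(0)) / ‖A_i − Π_{T∖i}(A_i)‖₂²; in particular a*_i > 0 if and only if A_iᵀ Π_{T∖i}(0) < ‖Π_{T∖i}(0)‖₂². -/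

import Mathlib

open Matrix

noncomputable section

/-- Euclidean norm of a finite real vector. -/
def enorm2 {k : ℕ} (w : Fin k → ℝ) : ℝ := Real.sqrt (∑ j, (w j) ^ 2)

lemma enorm2_sq' {k : ℕ} (w : Fin k → ℝ) : (enorm2 w) ^ 2 = w ⬝ᵥ w := by
  unfold enorm2
  rw [Real.sq_sqrt (Finset.sum_nonneg fun j _ => sq_nonneg _)]
  simp [dotProduct, sq]

lemma perp_of_min {k : ℕ} (p u : Fin k → ℝ)
    (h : ∀ t : ℝ, enorm2 p ≤ enorm2 (p + t • u)) : p ⬝ᵥ u = 0 := by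
  have h2 : ∀ t : ℝ, 0 ≤ 2 * t * (p ⬝ᵥ u) + t ^ 2 * (u ⬝ᵥ u) := by
    intro t
    have h0 : 0 ≤ enorm2 p := Real.sqrt_nonneg _
    have h1 := pow_le_pow_left₀ h0 (h t) 2
    rw [enorm2_sq', enorm2_sq'] at h1
    simp only [add_dotProduct, dotProduct_add, smul_dotProduct, dotProduct_smul,
      smul_eq_mul, dotProduct_comm u p] at h1
    nlinarith
  have hD : 0 ≤ u ⬝ᵥ u := by rw [← enorm2_sq']; positivity
  generalize u ⬝ᵥ u = D at *
  generalize p ⬝ᵥ u = c at *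
  have h3 := h2 (-c / (D + 1))
  have e : 2 * (-c / (D + 1)) * c + (-c / (D + 1)) ^ 2 * D = -(c ^ 2 * (D + 2)) / (D + 1) ^ 2 := by
    field_simp
    ring
  rw [e, le_div_iff₀ (by positivity)] at h3
  have : c ^ 2 = 0 := by nlinarith [sq_nonneg c, mul_nonneg (sq_nonneg c) hD]
  exact pow_eq_zero_iff (two_ne_zero) |>.1 this

/-- Coefficient-sign characterization: if `Π_T(0) = ∑ j, a*_j A_j` with `∑ j a*_j = 1`,
`p0 = Π_{T∖i}(0)` is the minimum-norm point of `T∖i` and `pA = Π_{T∖i}(A_i)` is the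
projection of row `A_i` onto `T∖i`, then
`a*_i = (‖p0‖² − A_iᵀ p0) / ‖A_i − pA‖²`; in particular `a*_i > 0 ↔ A_iᵀ p0 < ‖p0‖²`. -/
theorem stmt2 (n d : ℕ) (A : Matrix (Fin n) (Fin d) ℝ) (hK : IsUnit (A * Aᵀ).det)
    (i : Fin n)
    (T : Set (Fin d → ℝ)) (hT : T = {v | ∃ a : Fin n → ℝ, (∑ j, a j) = 1 ∧ v = Aᵀ *ᵥ a})
    (Tdel : Set (Fin d → ℝ))
    (hTdel : Tdel = {v | ∃ a : Fin n → ℝ, a i = 0 ∧ (∑ j, a j) = 1 ∧ v = Aᵀ *ᵥ a})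
    (p0 : Fin d → ℝ) (hp0T : p0 ∈ Tdel) (hp0min : ∀ v ∈ Tdel, enorm2 p0 ≤ enorm2 v)
    (pA : Fin d → ℝ) (hpAT : pA ∈ Tdel)
    (hpAmin : ∀ v ∈ Tdel, enorm2 (A i - pA) ≤ enorm2 (A i - v))
    (astar : Fin n → ℝ) (hsum : ∑ j, astar j = 1)
    (hmin : ∀ v ∈ T, enorm2 (Aᵀ *ᵥ astar) ≤ enorm2 v) :
    astar i = ((enorm2 p0) ^ 2 - A i ⬝ᵥ p0) / (enorm2 (A i - pA)) ^ 2 ∧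
      (0 < astar i ↔ A i ⬝ᵥ p0 < (enorm2 p0) ^ 2) := by
  subst hT hTdel
  obtain ⟨b, hb0, hb1, rfl⟩ := hp0T
  obtain ⟨c, hc0, hc1, rfl⟩ := hpAT
  have hAi : A i = Aᵀ *ᵥ (Pi.single i 1) := by
    ext j; simp
  have hr : A i - Aᵀ *ᵥ c = Aᵀ *ᵥ (Pi.single i 1 - c) := by
    rw [mulVec_sub, ← hAi]
  -- x ⊥ r
  have hx : (Aᵀ *ᵥ astar) ⬝ᵥ (A i - Aᵀ *ᵥ c) = 0 := by
    apply perp_of_min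
    intro t
    apply hmin
    refine ⟨astar + t • (Pi.single i 1 - c), ?_, ?_⟩
    · simp [Finset.sum_add_distrib, ← Finset.mul_sum, hsum, hc1]
    · rw [hr, mulVec_add, mulVec_smul]
  have hp : (Aᵀ *ᵥ b) ⬝ᵥ (Aᵀ *ᵥ (c - b)) = 0 := by
    apply perp_of_min
    intro t
    apply hp0min
    refine ⟨b + t • (c - b), ?_, ?_, ?_⟩
    · simp [hb0, hc0]
    · simp [Finset.sum_add_distrib, ← Finset.mul_sum, hb1, hc1]
    · rw [mulVec_add, mulVec_smul]
  have hw : (A i - Aᵀ *ᵥ c) ⬝ᵥ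
      (Aᵀ *ᵥ ((astar - astar i • Pi.single i 1 + astar i • c) - b)) = 0 := by
    apply perp_of_min
    intro t
    have := hpAmin (Aᵀ *ᵥ (c - t • ((astar - astar i • Pi.single i 1 + astar i • c) - b)))
      ⟨_, ?_, ?_, rfl⟩
    · convert this using 2
      rw [mulVec_sub _ c, mulVec_smul]
      abel
    · simp [hb0, hc0]
    · simp [Finset.sum_add_distrib, ← Finset.mul_sum, hb1, hc1, hsum]
  have hrne : 0 < (A i - Aᵀ *ᵥ c) ⬝ᵥ (A i - Aᵀ *ᵥ c) := by
    have h0 : 0 ≤ (A i - Aᵀ *ᵥ c) ⬝ᵥ (A i - Aᵀ *ᵥ c) := by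
      rw [← enorm2_sq']; positivity
    refine lt_of_le_of_ne h0 fun h => ?_
    have h1 := dotProduct_self_eq_zero.1 h.symm
    rw [hr] at h1
    have h2 : (A * Aᵀ) *ᵥ (Pi.single i 1 - c) = 0 := by
      rw [← mulVec_mulVec, h1, mulVec_zero]
    have h3 := eq_zero_of_mulVec_eq_zero hK.ne_zero h2
    have h4 := congrFun h3 i
    simp [hc0] at h4
  have key : astar i * ((A i - Aᵀ *ᵥ c) ⬝ᵥ (A i - Aᵀ *ᵥ c))
      = (Aᵀ *ᵥ b) ⬝ᵥ (Aᵀ *ᵥ b) - A i ⬝ᵥ (Aᵀ *ᵥ b) := by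
    simp only [mulVec_sub, mulVec_add, mulVec_smul, ← hAi] at hp hw
    generalize Aᵀ *ᵥ b = p at *
    generalize Aᵀ *ᵥ c = q at *
    generalize Aᵀ *ᵥ astar = x at *
    simp only [dotProduct_sub, sub_dotProduct, dotProduct_add, dotProduct_smul,
      smul_eq_mul] at *
    rw [dotProduct_comm x, dotProduct_comm x] at hx
    rw [dotProduct_comm p q] at hp
    rw [dotProduct_comm (A i) q] at *
    linarith
  rw [enorm2_sq', enorm2_sq']
  have h1 := eq_div_of_mul_eq hrne.ne' key
  refine ⟨h1, ?_⟩
  rw [h1, div_pos_iff_of_pos_right hrne, sub_pos]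

end
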